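/- Optimality gap lower-bounds accuracy: assume σ has full support and let δ ∈ (0,1). Fix a prior policy φ ∈ M and define the optimality gap G(φ;π*) := −2χ_φ(π*) + log₂ e. Let π̂ be a maximizer over all d-policies of α_train(π;π*) − √((−2χ_φ(π) + log₂ e + log₂(1/δ))/(2N)). Then with probability at least 1−δ over the i.i.d. uniform draw of the training contexts, α(π̂;π*) ≥ 1 − √((2·G(φ;π*) + 2·log₂(1/δ))/N). -/

import Mathlib

open Finset

/-- A learning system: a commutative additive monoid `M` of stochastic policies,
a finite nonempty set `S` of contexts, a finite nonempty behavior set `A s` for each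
context `s`, and an inference function `inf` assigning to each policy and context a
probability mass function on the behaviors of that context, satisfying the chain rule. -/
structure LearningSystem (M : Type) [AddCommMonoid M] (S : Type) [Fintype S] [DecidableEq S] :
    Type where
  A : S → Finset M
  A_nonempty : ∀ s, (A s).Nonempty
  inf : M → S → M → ℝ
  inf_nonneg : ∀ φ s a, 0 ≤ inf φ s a
  inf_eq_zero_of_not_mem : ∀ φ s a, a ∉ A s → inf φ s a = 0
  inf_sum_one : ∀ φ s, ∑ a ∈ A s, inf φ s a = 1
  chain_rule : ∀ (φ : M) (s₁ s₂ : S) (a₁ a₂ : M), a₁ ∈ A s₁ → a₂ ∈ A s₂ →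
    inf φ s₁ a₁ * inf (φ + a₁) s₂ a₂ = inf φ s₂ a₂ * inf (φ + a₂) s₁ a₁

namespace LearningSystem

variable {M S : Type} [AddCommMonoid M] [Fintype S] [DecidableEq S]

/-- A deterministic policy (d-policy): an assignment of a behavior `π s ∈ A s` to
every context `s ∈ S`. -/
abbrev DPolicy (L : LearningSystem M S) : Type := ∀ s : S, {a : M // a ∈ L.A s}

/-- `σ` has full support: every behavior of every context has positive probability
under every prior policy. -/
def FullSupport (L : LearningSystem M S) : Prop :=
  ∀ (φ : M) (s : S) (a : M), a ∈ L.A s → 0 < L.inf φ s a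

/-- The coherence of a d-policy `π` relative to the prior policy `φ`, computed along
the enumeration `f` of contexts:
`∑ n, log₂ σ(φ + ∑_{m<n} π(f m), f n)(π (f n))`. -/
noncomputable def cohAlong (L : LearningSystem M S) (φ : M) (π : L.DPolicy)
    {k : ℕ} (f : Fin k → S) : ℝ :=
  ∑ n : Fin k, Real.logb 2
    (L.inf (φ + ∑ m ∈ Finset.univ.filter (fun m => m < n), ((π (f m) : M)))
      (f n) ((π (f n) : M)))

/-- The product `∏ n, σ(φ + ∑_{m<n} π(f m), f n)(π (f n))` along the enumeration `f`. -/
noncomputable def prodAlong (L : LearningSystem M S) (φ : M) (π : L.DPolicy)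
    {k : ℕ} (f : Fin k → S) : ℝ :=
  ∏ n : Fin k,
    L.inf (φ + ∑ m ∈ Finset.univ.filter (fun m => m < n), ((π (f m) : M)))
      (f n) ((π (f n) : M))

/-- Accuracy of `π` with respect to the ground truth `πs`:
`α(π;π*) = (1/|S|) ∑_{s∈S} 1[π(s) = π*(s)]`. -/
noncomputable def accuracy [DecidableEq M] (L : LearningSystem M S)
    (π πs : L.DPolicy) : ℝ :=
  (∑ s : S, if (π s : M) = ((πs s : M)) then (1 : ℝ) else 0) / (Fintype.card S : ℝ)

/-- Training accuracy of `π` on the training contexts `shat`: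
`α_train(π;π*) = (1/N) ∑_i 1[π(ŝ_i) = π*(ŝ_i)]`. -/
noncomputable def trainAccuracy [DecidableEq M] (L : LearningSystem M S) {N : ℕ}
    (shat : Fin N → S) (π πs : L.DPolicy) : ℝ :=
  (∑ i : Fin N, if (π (shat i) : M) = ((πs (shat i) : M)) then (1 : ℝ) else 0) / (N : ℝ)

end LearningSystem

theorem aux_sum_prod {M : Type} [AddCommMonoid M] : ∀ (k : ℕ) (B : Fin k → Finset M)
    (g : M → Fin k → M → ℝ) (_ : ∀ φ n, ∑ a ∈ B n, g φ n a = 1) (φ : M),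
    ∑ ρ : (∀ n : Fin k, {a : M // a ∈ B n}), ∏ n : Fin k,
      g (φ + ∑ m ∈ Finset.univ.filter (fun m => m < n), (ρ m : M)) n (ρ n : M) = 1 := by
  intro k
  induction k with
  | zero => intro B g _ φ; simp
  | succ k ih =>
    intro B g hg φ
    rw [← Equiv.sum_comp (Fin.consEquiv (fun n : Fin (k+1) => {a : M // a ∈ B n})),
      Fintype.sum_prod_type]
    have key : ∀ (x : {a : M // a ∈ B 0}) (y : ∀ n : Fin k, {a : M // a ∈ B n.succ}),
        ∏ n : Fin (k+1), g (φ + ∑ m ∈ Finset.univ.filter (fun m => m < n),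
          ((Fin.consEquiv (fun n : Fin (k+1) => {a : M // a ∈ B n}) (x, y)) m : M)) n
          ((Fin.consEquiv (fun n : Fin (k+1) => {a : M // a ∈ B n}) (x, y)) n : M)
        = g φ 0 x * ∏ n : Fin k, g ((φ + (x : M)) +
          ∑ m ∈ Finset.univ.filter (fun m => m < n), (y m : M)) n.succ (y n : M) := by
      intro x y
      rw [Fin.prod_univ_succ]
      congr 1
      · simp [Fin.consEquiv]
      · refine Finset.prod_congr rfl fun n _ => ?_
        rw [Finset.sum_filter, Fin.sum_univ_succ, Finset.sum_filter]
        simp [Fin.consEquiv, add_assoc]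
    simp only [key]
    simp only [← Finset.mul_sum]
    have h2 := fun x : {a : M // a ∈ B 0} => ih (fun n => B n.succ)
      (fun φ n a => g φ n.succ a) (fun φ n => hg φ n.succ) (φ + x)
    simp only [h2, mul_one]
    rw [Finset.univ_eq_attach, Finset.sum_attach (B 0) (fun a => g φ 0 a)]
    exact hg φ 0

theorem aux_policy_sum {M S : Type} [AddCommMonoid M] [Fintype S] [DecidableEq S]
    (L : LearningSystem M S) (φ : M) {k : ℕ} (e : Fin k ≃ S) :
    ∑ π : L.DPolicy, L.prodAlong φ π e = 1 := by
  rw [← aux_sum_prod k (fun n => L.A (e n)) (fun φ n a => L.inf φ (e n) a)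
    (fun φ n => L.inf_sum_one φ (e n)) φ,
    ← Equiv.sum_comp (Equiv.piCongrLeft (fun s => {a : M // a ∈ L.A s}) e).symm]
  rfl

theorem aux_hoeffding {S : Type} [Fintype S] [Nonempty S] (x : S → ℝ)
    (hx : ∀ s, x s ∈ Set.Icc (0 : ℝ) 1) (t : ℝ) :
    ∑ s, Real.exp (t * (x s - (∑ s, x s) / (Fintype.card S : ℝ)))
      ≤ (Fintype.card S : ℝ) * Real.exp (t ^ 2 / 8) := by
  letI : MeasurableSpace S := ⊤
  haveI : MeasurableSingletonClass S := ⟨fun _ => trivial⟩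
  have hc : (0 : ℝ) < Fintype.card S := by exact_mod_cast Fintype.card_pos
  have hI : ∀ f : S → ℝ, ∫ s, f s ∂(PMF.uniformOfFintype S).toMeasure
      = (∑ s, f s) / (Fintype.card S : ℝ) := by
    intro f
    rw [PMF.integral_eq_sum]
    simp [← Finset.mul_sum, div_eq_inv_mul]
  have h := (ProbabilityTheory.hasSubgaussianMGF_of_mem_Icc
    (μ := (PMF.uniformOfFintype S).toMeasure) (X := x) (a := 0) (b := 1)
    (measurable_of_finite x).aemeasurable (Filter.Eventually.of_forall hx)).mgf_le t
  rw [ProbabilityTheory.mgf, hI, hI, div_le_iff₀ hc] at h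
  refine h.trans (le_of_eq ?_)
  rw [mul_comm]
  congr 2
  simp
  ring

theorem aux_tail {S : Type} [Fintype S] [DecidableEq S] [Nonempty S] (x : S → ℝ)
    (hx : ∀ s, x s ∈ Set.Icc (0 : ℝ) 1) (N : ℕ) (hN : 1 ≤ N) (t : ℝ) (ht : 0 ≤ t) :
    ((Finset.univ.filter (fun w : Fin N → S =>
      (∑ s, x s) / (Fintype.card S : ℝ) < (∑ i, x (w i)) / (N : ℝ) - t)).card : ℝ)
      ≤ (Fintype.card S : ℝ) ^ N * Real.exp (-(2 * N * t ^ 2)) := by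
  set p := (∑ s, x s) / (Fintype.card S : ℝ) with hp
  have hN0 : (0 : ℝ) < N := by exact_mod_cast hN
  set F := Finset.univ.filter (fun w : Fin N → S => p < (∑ i, x (w i)) / (N : ℝ) - t)
  have h1 : (F.card : ℝ) * Real.exp (4 * N * t ^ 2)
      ≤ ∑ w : Fin N → S, ∏ i, Real.exp (4 * t * (x (w i) - p)) := by
    calc (F.card : ℝ) * Real.exp (4 * N * t ^ 2)
        = ∑ w ∈ F, Real.exp (4 * N * t ^ 2) := by simp
      _ ≤ ∑ w ∈ F, ∏ i, Real.exp (4 * t * (x (w i) - p)) := by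
          refine Finset.sum_le_sum fun w hw => ?_
          rw [← Real.exp_sum, ← Finset.mul_sum, Finset.sum_sub_distrib]
          apply Real.exp_le_exp.2
          have hw' := (Finset.mem_filter.1 hw).2
          have : (p + t) * N < ∑ i, x (w i) := by
            rw [← lt_div_iff₀ hN0]; linarith
          simp only [Finset.sum_const, Finset.card_univ, Fintype.card_fin, nsmul_eq_mul]
          nlinarith
      _ ≤ _ := Finset.sum_le_sum_of_subset_of_nonneg (Finset.subset_univ _)
          fun w _ _ => Finset.prod_nonneg fun i _ => (Real.exp_pos _).le
  have h2 : ∑ w : Fin N → S, ∏ i, Real.exp (4 * t * (x (w i) - p))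
      ≤ (Fintype.card S : ℝ) ^ N * Real.exp (2 * N * t ^ 2) := by
    have := Finset.prod_univ_sum (fun _ : Fin N => (Finset.univ : Finset S))
      (fun _ s => Real.exp (4 * t * (x s - p)))
    rw [Fintype.piFinset_univ] at this
    rw [← this]
    simp only [Finset.prod_const, Finset.card_univ, Fintype.card_fin]
    calc _ ≤ ((Fintype.card S : ℝ) * Real.exp ((4 * t) ^ 2 / 8)) ^ N :=
          pow_le_pow_left₀ (Finset.sum_nonneg fun _ _ => (Real.exp_pos _).le)
            (aux_hoeffding x hx (4 * t)) N
      _ = _ := by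
          rw [mul_pow, ← Real.exp_nat_mul]
          congr 2
          ring
  have h3 := h1.trans h2
  rw [← le_div_iff₀ (Real.exp_pos _), mul_div_assoc, ← Real.exp_sub] at h3
  refine h3.trans (le_of_eq ?_)
  congr 2
  ring

theorem aux_log_le {y : ℝ} (hy : 0 ≤ Real.log y) : Real.log y ≤ Real.logb 2 y := by
  rw [Real.logb, le_div_iff₀ (Real.log_pos (by norm_num))]
  have := Real.log_two_lt_d9
  nlinarith

theorem aux_pos {M S : Type} [AddCommMonoid M] [Fintype S] [DecidableEq S]
    (L : LearningSystem M S) (hfs : L.FullSupport) (φ : M) {k : ℕ} (e : Fin k ≃ S)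
    (π : L.DPolicy) : 0 < L.prodAlong φ π e :=
  Finset.prod_pos fun n _ => hfs _ _ _ (π (e n)).2

theorem aux_coh {M S : Type} [AddCommMonoid M] [Fintype S] [DecidableEq S]
    (L : LearningSystem M S) (hfs : L.FullSupport) (φ : M) {k : ℕ} (e : Fin k ≃ S)
    (π : L.DPolicy) : L.cohAlong φ π e = Real.logb 2 (L.prodAlong φ π e) := by
  unfold LearningSystem.prodAlong LearningSystem.cohAlong
  rw [Real.logb_prod]
  exact fun n _ => (hfs _ _ _ (π (e n)).2).ne'

/-- Optimality gap lower-bounds accuracy: fix a prior policy `φ` and let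
`G(φ;π*) = −2χ_φ(π*) + log₂ e`. If `π̂` (a function of the training draw) maximizes
`α_train(π;π*) − √((−2χ_φ(π) + log₂ e + log₂(1/δ))/(2N))` over all d-policies, then
with probability at least `1 − δ` over the i.i.d. uniform draw of the training
contexts, `α(π̂;π*) ≥ 1 − √((2G(φ;π*) + 2 log₂(1/δ))/N)`. -/
theorem optimality_gap_lower_bounds_accuracy {M S : Type} [AddCommMonoid M]
    [DecidableEq M] [Fintype S] [DecidableEq S] [Nonempty S] (L : LearningSystem M S)
    (hfs : L.FullSupport) (φ : M) {k : ℕ} (e : Fin k ≃ S) (πs : L.DPolicy)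
    (N : ℕ) (hN : 1 ≤ N) (δ : ℝ) (hδ0 : 0 < δ) (hδ1 : δ < 1)
    (pihat : (Fin N → S) → L.DPolicy)
    (hpihat : ∀ shat : Fin N → S, ∀ π : L.DPolicy,
      L.trainAccuracy shat π πs -
          Real.sqrt ((-2 * L.cohAlong φ π ⇑e + Real.logb 2 (Real.exp 1) +
            Real.logb 2 (1 / δ)) / (2 * (N : ℝ))) ≤
        L.trainAccuracy shat (pihat shat) πs -
          Real.sqrt ((-2 * L.cohAlong φ (pihat shat) ⇑e + Real.logb 2 (Real.exp 1) +
            Real.logb 2 (1 / δ)) / (2 * (N : ℝ)))) :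
    1 - δ ≤
      (Nat.card {shat : Fin N → S //
          1 - Real.sqrt ((2 * (-2 * L.cohAlong φ πs ⇑e + Real.logb 2 (Real.exp 1)) +
              2 * Real.logb 2 (1 / δ)) / (N : ℝ)) ≤
            L.accuracy (pihat shat) πs} : ℝ) /
        ((Fintype.card S : ℝ) ^ N) := by
  classical
  have hN0 : (0 : ℝ) < N := by exact_mod_cast hN
  have hc : (0 : ℝ) < Fintype.card S := by exact_mod_cast Fintype.card_pos
  have hcN : (0 : ℝ) < (Fintype.card S : ℝ) ^ N := by positivity
  set R : L.DPolicy → ℝ := fun π => -2 * L.cohAlong φ π ⇑e + Real.logb 2 (Real.exp 1) +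
            Real.logb 2 (1 / δ) with hR
  have hP1 : ∀ π, L.prodAlong φ π e ≤ 1 := by
    intro π
    rw [← aux_policy_sum L φ e]
    exact Finset.single_le_sum (f := fun π => L.prodAlong φ π e)
      (fun π _ => (aux_pos L hfs φ e π).le) (Finset.mem_univ π)
  have hRle : ∀ π, -Real.log (L.prodAlong φ π e) - Real.log δ ≤ R π := by
    intro π
    have hp := aux_pos L hfs φ e π
    have h0 : Real.log (L.prodAlong φ π e) ≤ 0 := Real.log_nonpos hp.le (hP1 π)
    have h1 := aux_log_le (y := (L.prodAlong φ π e)⁻¹) (by rw [Real.log_inv]; linarith)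
    have h2 := aux_log_le (y := 1 / δ)
      (by rw [one_div, Real.log_inv]; linarith [Real.log_neg hδ0 hδ1])
    have h3 := aux_log_le (y := Real.exp 1) (by simp)
    rw [Real.log_inv, Real.logb_inv] at h1
    rw [Real.log_exp] at h3
    rw [one_div, Real.log_inv, ← one_div] at h2
    simp only [hR, aux_coh L hfs φ e π]
    linarith
  have hR0 : ∀ π, 0 ≤ R π := by
    intro π
    have h0 : Real.log (L.prodAlong φ π e) ≤ 0 :=
      Real.log_nonpos (aux_pos L hfs φ e π).le (hP1 π)
    linarith [hRle π, Real.log_neg hδ0 hδ1]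
  set bad : L.DPolicy → Finset (Fin N → S) := fun π => Finset.univ.filter (fun w =>
    L.accuracy π πs < L.trainAccuracy w π πs - Real.sqrt (R π / (2 * (N : ℝ)))) with hbad
  have hbadle : ∀ π, ((bad π).card : ℝ)
      ≤ (Fintype.card S : ℝ) ^ N * (L.prodAlong φ π e * δ) := by
    intro π
    have h := aux_tail (fun s => if (π s : M) = ((πs s : M)) then (1 : ℝ) else 0)
      (fun s => by split_ifs <;> simp) N hN (Real.sqrt (R π / (2 * (N : ℝ))))
      (Real.sqrt_nonneg _)
    refine h.trans ?_
    refine mul_le_mul_of_nonneg_left ?_ hcN.le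
    rw [Real.sq_sqrt (div_nonneg (hR0 π) (by positivity)), mul_div_cancel₀ _ (by positivity)]
    rw [← Real.exp_log (mul_pos (aux_pos L hfs φ e π) hδ0),
      Real.log_mul (aux_pos L hfs φ e π).ne' hδ0.ne']
    apply Real.exp_le_exp.2
    linarith [hRle π]
  set B := Finset.univ.biUnion bad with hB
  have hBle : (B.card : ℝ) ≤ (Fintype.card S : ℝ) ^ N * δ := by
    calc (B.card : ℝ) ≤ ∑ π, ((bad π).card : ℝ) := by exact_mod_cast Finset.card_biUnion_le
      _ ≤ ∑ π, (Fintype.card S : ℝ) ^ N * (L.prodAlong φ π e * δ) :=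
          Finset.sum_le_sum fun π _ => hbadle π
      _ = _ := by rw [← Finset.mul_sum, ← Finset.sum_mul, aux_policy_sum, one_mul]
  rw [Nat.card_eq_fintype_card, Fintype.card_subtype, le_div_iff₀ hcN]
  have hsub : Bᶜ ⊆ Finset.univ.filter (fun shat : Fin N → S =>
      1 - Real.sqrt ((2 * (-2 * L.cohAlong φ πs ⇑e + Real.logb 2 (Real.exp 1)) +
              2 * Real.logb 2 (1 / δ)) / (N : ℝ)) ≤ L.accuracy (pihat shat) πs) := by
    intro w hw
    rw [Finset.mem_filter]
    refine ⟨Finset.mem_univ _, ?_⟩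
    have hgood : L.trainAccuracy w (pihat w) πs - Real.sqrt (R (pihat w) / (2 * (N : ℝ)))
        ≤ L.accuracy (pihat w) πs := by
      by_contra hcon
      rw [not_le] at hcon
      exact (Finset.mem_compl.1 hw) (Finset.mem_biUnion.2 ⟨pihat w, Finset.mem_univ _,
        Finset.mem_filter.2 ⟨Finset.mem_univ _, hcon⟩⟩)
    have htr : L.trainAccuracy w πs πs = 1 := by
      simp [LearningSystem.trainAccuracy, hN0.ne']
    have hopt := hpihat w πs
    rw [htr] at hopt
    refine le_trans ?_ (hopt.trans hgood)
    apply sub_le_sub_left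
    apply Real.sqrt_le_sqrt
    have := hR0 πs
    simp only [hR] at this
    rw [div_le_div_iff₀ (by positivity) hN0]
    nlinarith
  have hcard := Finset.card_le_card hsub
  have hcompl := Finset.card_add_card_compl B
  rw [Fintype.card_fun, Fintype.card_fin] at hcompl
  have hcompl' : (B.card : ℝ) + (Bᶜ.card : ℝ) = (Fintype.card S : ℝ) ^ N := by
    exact_mod_cast hcompl
  have hcard' := (Nat.cast_le (α := ℝ)).2 hcard
  nlinarith
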